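/- Let Ψ ∈ PGL_{n+1}(F_q) be an automorphism of ℙ^n and ψ its fractional jump. Suppose it is not the case that (q is prime and n = 1), and not the case that (q = 2 and n = 2). Then Ψ acts transitively on ℙ^n if and only if ψ acts transitively on A^n = F_q^n. -/

import Mathlib

/-- The projective automorphism of `ℙ^n(K)` induced by an invertible matrix `M`. -/
noncomputable def projMap {K : Type*} [Field K] {n : ℕ} (M : GL (Fin (n + 1)) K) :
    Projectivization K (Fin (n + 1) → K) → Projectivization K (Fin (n + 1) → K) :=
  Projectivization.map
    ((Matrix.GeneralLinearGroup.toLin M).toLinearEquiv :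
      (Fin (n + 1) → K) →ₗ[K] (Fin (n + 1) → K))
    (Matrix.GeneralLinearGroup.toLin M).toLinearEquiv.injective

/-- The projective automorphism induced by `M` is transitive on `ℙ^n(K)`. -/
def ProjTransitive {K : Type*} [Field K] {n : ℕ} (M : GL (Fin (n + 1)) K) : Prop :=
  ∀ P Q : Projectivization K (Fin (n + 1) → K), ∃ k : ℕ, (projMap M)^[k] P = Q

/-- The affine chart `U = {X_n ≠ 0} ⊆ ℙ^n(K)`. -/
def affineChart (K : Type*) [Field K] (n : ℕ) : Set (Projectivization K (Fin (n + 1) → K)) :=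
  {P | P.rep (Fin.last n) ≠ 0}

/-- The embedding `π : A^n → U ⊆ ℙ^n(K)`, `(x_1, …, x_n) ↦ [x_1 : ⋯ : x_n : 1]`. -/
def toProj {K : Type*} [Field K] {n : ℕ} (x : Fin n → K) :
    Projectivization K (Fin (n + 1) → K) :=
  Projectivization.mk K (Fin.snoc x 1) (fun h => by
    have h1 := congrFun h (Fin.last n)
    simp at h1)

/-- The inverse `π⁻¹ : U → A^n` of the affine embedding (junk values off `U`). -/
noncomputable def fromProj {K : Type*} [Field K] {n : ℕ}
    (P : Projectivization K (Fin (n + 1) → K)) : Fin n → K :=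
  fun i => P.rep (Fin.castSucc i) / P.rep (Fin.last n)

/-- The fractional jump index `J_{π(x),Ψ} = min {k ≥ 1 : Ψ^k(π(x)) ∈ U}`. -/
noncomputable def jumpIndex {K : Type*} [Field K] {n : ℕ} (M : GL (Fin (n + 1)) K)
    (x : Fin n → K) : ℕ :=
  sInf {k : ℕ | 1 ≤ k ∧ (projMap M)^[k] (toProj x) ∈ affineChart K n}

/-- The fractional jump `ψ(x) = π⁻¹(Ψ^{J_{π(x),Ψ}}(π(x)))` of the projective automorphism
induced by `M`. -/
noncomputable def fracJump {K : Type*} [Field K] {n : ℕ} (M : GL (Fin (n + 1)) K)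
    (x : Fin n → K) : Fin n → K :=
  fromProj ((projMap M)^[jumpIndex M x] (toProj x))

open Module

theorem core_nil {K R : Type*} [Field K] [CommRing R] [Algebra K R] [FiniteDimensional K R]
    (I : Ideal R) (hI1 : I ≠ ⊤) (hu : ∀ r ∉ I, IsUnit r) (y : R) (hy : y ∈ I) (i : ℕ)
    (hi : y ^ (i+1) ≠ 0) :
    finrank K ((Ideal.span {y ^ (i+1)}).restrictScalars K) + i
      ≤ finrank K (I.restrictScalars K) := by
  induction i with
  | zero =>
    rw [add_zero]
    apply Submodule.finrank_mono
    intro z hz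
    replace hz : z ∈ Ideal.span {y ^ (0 + 1)} := hz
    rw [zero_add, pow_one] at hz
    exact (Ideal.span_singleton_le_iff_mem I).2 hy hz
  | succ i ih =>
    have h0 : y ^ (i+1) ≠ 0 := fun h => hi (by rw [pow_succ, h, zero_mul])
    have := ih h0
    have hlt : (Ideal.span {y ^ (i+1+1)}).restrictScalars K < (Ideal.span {y ^ (i+1)}).restrictScalars K := by
      apply lt_of_le_of_ne
      · intro z hz
        exact (Ideal.span_singleton_le_span_singleton.2 (pow_dvd_pow y (Nat.le_succ _))) hz
      · intro heq
        have hm : y ^ (i+1) ∈ (Ideal.span {y ^ (i+1)}).restrictScalars K :=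
          Ideal.mem_span_singleton_self _
        rw [← heq] at hm
        obtain ⟨z, hz⟩ := Ideal.mem_span_singleton.1 (show y ^ (i+1) ∈ Ideal.span {y ^ (i+1+1)} from hm)
        have hun : IsUnit (1 - y * z) := by
          apply hu
          intro hmem
          apply hI1
          rw [Ideal.eq_top_iff_one]
          have := I.add_mem hmem (I.mul_mem_right z hy)
          simpa using this
        apply h0
        have : y ^ (i+1) * (1 - y * z) = 0 := by
          rw [mul_sub, mul_one, ← mul_assoc, ← pow_succ, ← hz, sub_self]
        exact (hun.mul_left_eq_zero).1 this
    have := Submodule.finrank_lt_finrank_of_lt hlt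
    omega

theorem core_card {K R : Type*} [Field K] [CommRing R] [Algebra K R] [Finite R]
    (x : R) (hx : IsUnit x) (I : Ideal R) (hI1 : I ≠ ⊤)
    (h : ∀ r ∉ I, ∃ c : K, ∃ k : ℕ, r = c • x ^ k) (p : ℕ) [CharP R p] [Fact p.Prime] (t : ℕ)
    (hnil : ∀ y ∈ I, y ^ (p ^ t) = 0) :
    Nat.card I ≤ p ^ t := by
  classical
  have : Nontrivial R := ⟨⟨0, 1, fun h01 => hI1 (by
    rw [Ideal.eq_top_iff_one, ← h01]; exact I.zero_mem)⟩⟩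
  have hc : ∀ c : K, c ≠ 0 → IsUnit (algebraMap K R c) := fun c hc =>
    (IsUnit.mk0 c hc).map _
  let N : Subgroup Rˣ := (Units.map (algebraMap K R : K →* R)).range
  let G := Rˣ ⧸ N
  have hout : ∀ y ∈ I, (1 + y) ∉ I := fun y hy hm => hI1 (by
    rw [Ideal.eq_top_iff_one]; simpa using I.sub_mem hm hy)
  have hunit : ∀ r ∉ I, ∃ c : Kˣ, ∃ k : ℕ, r = ((Units.map (algebraMap K R : K →* R) c * hx.unit ^ k : Rˣ) : R) := by
    intro r hr
    obtain ⟨c, k, e⟩ := h r hr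
    have c0 : c ≠ 0 := by
      rintro rfl
      apply hr; rw [e, zero_smul]; exact I.zero_mem
    refine ⟨Units.mk0 c c0, k, ?_⟩
    simp [e, Algebra.smul_def]
  have hnotin : ∀ g : Rˣ, (g : R) ∉ I := fun g hg => hI1 (I.eq_top_of_isUnit_mem hg g.isUnit)
  have hcyc : IsCyclic G := by
    refine ⟨⟨(hx.unit : G), ?_⟩⟩
    intro g
    obtain ⟨g, rfl⟩ := QuotientGroup.mk_surjective g
    obtain ⟨c, k, e⟩ := hunit g (hnotin g)
    have e' := Units.ext e
    refine ⟨k, ?_⟩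
    rw [e']
    simp only [QuotientGroup.mk_mul, QuotientGroup.mk_pow, zpow_natCast]
    have hcN : Units.map (algebraMap K R : K →* R) c ∈ N := ⟨c, rfl⟩
    rw [(QuotientGroup.eq_one_iff _).2 hcN]
    exact (one_mul ((hx.unit : G) ^ k)).symm
  have hun : ∀ y ∈ I, IsUnit (1 + y) := by
    intro y hy
    obtain ⟨c, k, e⟩ := hunit _ (hout y hy)
    rw [e]; exact Units.isUnit _
  have : Fintype G := Fintype.ofFinite _
  have hle := IsCyclic.card_pow_eq_one_le (α := G) (n := p ^ t) (pow_pos (Fact.out : p.Prime).pos _)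
  let F : I → {a : G // a ^ (p^t) = 1} := fun y => ⟨((hun y.1 y.2).unit : G), by
    rw [← QuotientGroup.mk_pow]
    have : (hun y.1 y.2).unit ^ (p^t) = 1 := by
      apply Units.ext
      simp [add_pow_char_pow, hnil y.1 y.2]
    rw [this]; rfl⟩
  have hF : Function.Injective F := by
    intro y z hyz
    have h1 : ((hun y.1 y.2).unit : G) = ((hun z.1 z.2).unit : G) := congrArg Subtype.val hyz
    rw [QuotientGroup.eq] at h1
    obtain ⟨c, hc'⟩ := h1
    have h2 : (1 + y.1) * algebraMap K R c = 1 + z.1 := by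
      have := congrArg Units.val (eq_inv_mul_iff_mul_eq.1 hc')
      simpa using this
    have h3 : algebraMap K R (c - 1) ∈ I := by
      have : algebraMap K R (c - 1) = z.1 - y.1 * algebraMap K R c := by
        rw [map_sub, map_one]; linear_combination h2
      rw [this]
      exact I.sub_mem z.2 (I.mul_mem_right _ y.2)
    have h4 : (c : K) - 1 = 0 := by
      by_contra hne
      exact hI1 (I.eq_top_of_isUnit_mem h3 (hc _ hne))
    have h5 : (c : K) = 1 := sub_eq_zero.1 h4
    rw [h5, map_one, mul_one] at h2
    exact Subtype.ext (add_left_cancel h2)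
  calc Nat.card I ≤ Nat.card {a : G // a ^ (p^t) = 1} := Nat.card_le_card_of_injective F hF
    _ ≤ p ^ t := by
      rw [Nat.card_eq_fintype_card, Fintype.card_subtype]; convert hle

theorem core {K R : Type*} [Field K] [Fintype K] [CommRing R] [Algebra K R] [FiniteDimensional K R]
    (n : ℕ) (hfr : finrank K R = n + 1)
    (x : R) (hx : IsUnit x) (I : Ideal R) (hI1 : I ≠ ⊤) (hI0 : I ≠ ⊥)
    (h : ∀ r ∉ I, ∃ c : K, ∃ k : ℕ, r = c • x ^ k) :
    (Nat.Prime (Fintype.card K) ∧ n = 1) ∨ (Fintype.card K = 2 ∧ n = 2) := by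
  have : Nontrivial R := ⟨⟨0, 1, fun h01 => hI1 (by
    rw [Ideal.eq_top_iff_one, ← h01]; exact I.zero_mem)⟩⟩
  have : Finite R := Module.finite_of_finite K
  obtain ⟨p, hp⟩ := CharP.exists K
  have hpp : p.Prime := CharP.char_is_prime K p
  have : Fact p.Prime := ⟨hpp⟩
  have : CharP R p := charP_of_injective_algebraMap (algebraMap K R).injective p
  obtain ⟨e, -, hq⟩ := FiniteField.card K p
  set q := Fintype.card K with hqdef
  have hpq : p ≤ q := by rw [hq]; exact Nat.le_self_pow e.ne_zero p
  have hu : ∀ r ∉ I, IsUnit r := by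
    intro r hr
    obtain ⟨c, k, e⟩ := h r hr
    have c0 : c ≠ 0 := by
      rintro rfl
      apply hr; rw [e, zero_smul]; exact I.zero_mem
    rw [e, Algebra.smul_def]
    exact ((IsUnit.mk0 c c0).map _).mul (hx.pow k)
  set d := finrank K (I.restrictScalars K) with hd
  have hcard : Nat.card I = q ^ d := by
    have := Module.natCard_eq_pow_finrank (K := K) (V := I.restrictScalars K)
    rw [Nat.card_eq_fintype_card (α := K)] at this
    exact this
  have hd1 : 1 ≤ d := by
    rw [Nat.one_le_iff_ne_zero]
    intro h0
    apply hI0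
    have := Submodule.finrank_eq_zero.1 h0
    rw [eq_bot_iff]
    intro z hz
    have hz' : z ∈ I.restrictScalars K := hz
    rw [this] at hz'
    simpa using hz'
  have hq2 : 2 ≤ q := le_trans hpp.two_le hpq
  have hIne : I.restrictScalars K ≠ ⊤ := by
    intro ht
    apply hI1
    rw [Ideal.eq_top_iff_one]
    have : (1 : R) ∈ I.restrictScalars K := by rw [ht]; trivial
    exact this
  have hdn : d < n + 1 := by
    rw [← hfr]; exact Submodule.finrank_lt hIne
  -- bound from nilpotency
  have bound : ∀ s, 1 ≤ s → (∀ y ∈ I, y ^ (s+1) = 0) → q ^ d ≤ q * s := by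
    intro s hs hnil
    have h1 := core_card x hx I hI1 h p (Nat.clog p (s+1)) (by
      intro y hy
      exact pow_eq_zero_of_le (Nat.le_pow_clog hpp.one_lt _) (hnil y hy))
    rw [hcard] at h1
    have h2 := Nat.pow_pred_clog_lt_self hpp.one_lt (x := s+1) (by omega)
    have h3 : 0 < Nat.clog p (s+1) := Nat.clog_pos hpp.one_lt (by omega)
    obtain ⟨t, ht⟩ : ∃ t, Nat.clog p (s+1) = t + 1 := ⟨_, (Nat.succ_pred_eq_of_pos h3).symm⟩
    rw [ht] at h1 h2
    simp only [Nat.pred_eq_sub_one, Nat.add_sub_cancel] at h2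
    calc q ^ d ≤ p ^ t * p := by rw [← pow_succ]; exact h1
      _ ≤ s * q := Nat.mul_le_mul (by omega) hpq
      _ = q * s := mul_comm _ _
  have hnil1 : ∀ y ∈ I, y ^ (d+1) = 0 := by
    intro y hy
    by_contra hne
    have h1 := core_nil (K := K) I hI1 hu y hy d hne
    have h2 : finrank K ((Ideal.span {y ^ (d+1)}).restrictScalars K) = 0 := by omega
    have h3 := Submodule.finrank_eq_zero.1 h2
    have hm : y ^ (d+1) ∈ (Ideal.span {y ^ (d+1)}).restrictScalars K :=
          Ideal.mem_span_singleton_self _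
    rw [h3] at hm
    exact hne (by simpa using hm)
  have e1 : q ^ d = q * q ^ (d-1) := by
    rw [← pow_succ']; congr 1; omega
  by_cases hdn' : d = n
  · have hb := bound d hd1 hnil1
    rw [e1] at hb
    have hb' : q ^ (d-1) ≤ d := Nat.le_of_mul_le_mul_left hb (by omega)
    rcases Nat.lt_or_ge 1 d with h1d | h1d
    · right
      obtain ⟨j, hj2⟩ : ∃ j, d = j + 2 := ⟨d - 2, by omega⟩
      rw [hj2] at hb'
      simp only [show j + 2 - 1 = j + 1 by omega] at hb'
      have : j < 2 ^ j := Nat.lt_two_pow_self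
      have h2j : 2 ^ j ≤ q ^ j := Nat.pow_le_pow_left hq2 j
      have h3 : q * (j+1) ≤ j + 2 := by
        calc q * (j+1) ≤ q * q ^ j := Nat.mul_le_mul_left _ (by omega)
          _ = q ^ (j+1) := by rw [pow_succ']
          _ ≤ _ := hb'
      have hj : j = 0 := by nlinarith
      subst hj
      refine ⟨by omega, by omega⟩
    · left
      have hd' : d = 1 := by omega
      refine ⟨?_, by omega⟩
      have h1 := core_card x hx I hI1 h p 1 (by
        intro y hy
        rw [pow_one]
        exact pow_eq_zero_of_le hpp.two_le (by have := hnil1 y hy; rwa [hd'] at this))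
      rw [hcard, hd', pow_one, pow_one] at h1
      have : q = p := le_antisymm h1 hpq
      rw [this]; exact hpp
  · exfalso
    -- an element b not in K + I
    have hnil2 : ∀ y ∈ I, y ^ d = 0 := by
      intro y hy
      by_contra hne
      obtain ⟨i, hi⟩ : ∃ i, d = i + 1 := ⟨d-1, by omega⟩
      have h1 := core_nil (K := K) I hI1 hu y hy i (hi ▸ hne)
      rw [← hi] at h1
      have h2 : finrank K ((Ideal.span {y ^ d}).restrictScalars K) ≤ 1 := by omega
      rw [finrank_le_one_iff] at h2
      obtain ⟨v, hv⟩ := h2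
      have key : ∀ b : R, ∃ β : K, b - algebraMap K R β ∈ I := by
        intro b
        obtain ⟨c1, hc1⟩ := hv ⟨y ^ d, Ideal.mem_span_singleton_self _⟩
        obtain ⟨c2, hc2⟩ := hv ⟨y ^ d * b, Ideal.mul_mem_right _ _ (Ideal.mem_span_singleton_self _)⟩
        have hc1' : c1 • (v : R) = y ^ d := congrArg Subtype.val hc1
        have hc2' : c2 • (v : R) = y ^ d * b := congrArg Subtype.val hc2
        have c10 : c1 ≠ 0 := by
          rintro rfl
          exact hne (by rw [← hc1', zero_smul])
        refine ⟨c2 / c1, ?_⟩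
        by_contra hb
        apply hne
        apply ((hu _ hb).mul_left_eq_zero).1
        generalize (v : R) = v' at hc1' hc2'
        rw [mul_sub, ← hc2', ← hc1', mul_comm _ (algebraMap K R _), ← Algebra.smul_def, smul_smul,
          div_mul_cancel₀ _ c10, sub_self]
      have hle : (⊤ : Submodule K R) ≤ I.restrictScalars K ⊔ Submodule.span K {1} := by
        intro b _
        obtain ⟨β, hβ⟩ := key b
        rw [Submodule.mem_sup]
        refine ⟨_, hβ, β • 1, Submodule.smul_mem _ _ (Submodule.mem_span_singleton_self _), ?_⟩
        rw [Algebra.smul_def, mul_one, sub_add_cancel]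
      have h3 := Submodule.finrank_mono hle
      rw [finrank_top, hfr] at h3
      have h4 := Submodule.finrank_add_le_finrank_add_finrank (I.restrictScalars K) (Submodule.span K {(1:R)})
      have h5 := finrank_span_singleton (K := K) (one_ne_zero (α := R))
      omega
    rcases Nat.lt_or_ge 1 d with h1d | h1d
    · obtain ⟨j, hj2⟩ : ∃ j, d = j + 2 := ⟨d - 2, by omega⟩
      have hb := bound (j+1) (by omega) (by rw [hj2] at hnil2; exact hnil2)
      rw [e1, hj2] at hb
      have hb' := Nat.le_of_mul_le_mul_left hb (by omega)
      have : j + 2 - 1 < q ^ (j+2-1) := Nat.lt_pow_self hq2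
      omega
    · have hd' : d = 1 := by omega
      have h1 := core_card x hx I hI1 h p 0 (by
        intro y hy
        have := hnil2 y hy
        rw [hd'] at this
        simpa using this)
      rw [hcard, hd', pow_one, pow_zero] at h1
      omega

theorem core_lin {K V : Type*} [Field K] [Fintype K] [AddCommGroup V] [Module K V]
    [FiniteDimensional K V] (n : ℕ) (hfr : finrank K V = n + 1) (L : V →ₗ[K] V)
    (N : ℕ) (hL : L ^ (N + 1) = 1) (φ : V →ₗ[K] K) (v0 : V) (hv0 : φ v0 ≠ 0)
    (hO : ∀ v, φ v ≠ 0 → ∃ c : K, ∃ k : ℕ, v = c • (L ^ k) v0)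
    (w : V) (hw : ¬ ∃ c : K, ∃ k : ℕ, w = c • (L ^ k) v0) :
    (Nat.Prime (Fintype.card K) ∧ n = 1) ∨ (Fintype.card K = 2 ∧ n = 2) := by
  letI : CommRing (Algebra.adjoin K {L}) := Algebra.adjoinCommRingOfComm K (by
    intro a ha b hb
    rw [Set.mem_singleton_iff.1 ha, Set.mem_singleton_iff.1 hb])
  have hind : ∀ S : Submodule K V, (∀ v, φ v ≠ 0 → v ∈ S) → ∀ v, v ∈ S := by
    intro S hS v
    by_cases hv : φ v = 0
    · have h1 : v + v0 ∈ S := hS _ (by rw [map_add, hv, zero_add]; exact hv0)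
      simpa using S.sub_mem h1 (hS v0 hv0)
    · exact hS v hv
  let x : Algebra.adjoin K {L} := ⟨L, Algebra.self_mem_adjoin_singleton K L⟩
  have hxp : ∀ k, ((x ^ k : Algebra.adjoin K {L}) : V →ₗ[K] V) = L ^ k := fun k => rfl
  let ev : Algebra.adjoin K {L} →ₗ[K] V :=
    (LinearMap.applyₗ v0).comp (Algebra.adjoin K {L}).val.toLinearMap
  have hev : ∀ a : Algebra.adjoin K {L}, ev a = (a : V →ₗ[K] V) v0 := fun a => rfl
  have hinj : Function.Injective ev := by
    rw [injective_iff_map_eq_zero]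
    intro a ha
    apply Subtype.ext
    apply LinearMap.ext
    have := hind (LinearMap.ker (a : V →ₗ[K] V)) (by
      intro v hv
      obtain ⟨c, k, rfl⟩ := hO v hv
      rw [LinearMap.mem_ker, map_smul]
      have hc : a * x ^ k = x ^ k * a := mul_comm _ _
      have hc' := congrArg (fun b : Algebra.adjoin K {L} => (b : V →ₗ[K] V) v0) hc
      have hc'' : (a : V →ₗ[K] V) ((L ^ k) v0) = (L ^ k) ((a : V →ₗ[K] V) v0) := hc'
      rw [hc'', ← hev, ha, map_zero, smul_zero])
    intro v
    exact this v
  have hsurj : Function.Surjective ev := by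
    intro v
    have := hind (LinearMap.range ev) (by
      intro v hv
      obtain ⟨c, k, rfl⟩ := hO v hv
      exact ⟨c • x ^ k, by rw [map_smul, hev, hxp]⟩)
    exact this v
  let E := LinearEquiv.ofBijective ev ⟨hinj, hsurj⟩
  let C : Set (Algebra.adjoin K {L}) := {a | ¬ ∃ c : K, ∃ k : ℕ, a = c • x ^ k}
  let S : Submodule K (Algebra.adjoin K {L}) := Submodule.span K C
  have hxN : x ^ (N + 1) = 1 := Subtype.ext hL
  have hxS : ∀ s ∈ S, x * s ∈ S := by
    intro s hs
    induction hs using Submodule.span_induction with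
    | mem a ha =>
      apply Submodule.subset_span
      rintro ⟨c, k, e⟩
      apply ha
      refine ⟨c, N + k, ?_⟩
      calc a = x ^ N * (x * a) := by rw [← mul_assoc, ← pow_succ, hxN, one_mul]
        _ = _ := by rw [e, mul_smul_comm, ← pow_add]
    | zero => rw [mul_zero]; exact S.zero_mem
    | add a b _ _ ha hb => rw [mul_add]; exact S.add_mem ha hb
    | smul c a _ ha => rw [mul_smul_comm]; exact S.smul_mem c ha
  have hrS : ∀ r : Algebra.adjoin K {L}, ∀ s ∈ S, r * s ∈ S := by
    rintro ⟨r, hr⟩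
    induction hr using Algebra.adjoin_induction with
    | mem a ha =>
      obtain rfl := Set.mem_singleton_iff.1 ha
      exact hxS
    | algebraMap c =>
      intro s hs
      have : (⟨algebraMap K _ c, Subalgebra.algebraMap_mem _ c⟩ : Algebra.adjoin K {L}) * s = c • s :=
        (Algebra.smul_def c s).symm
      rw [this]
      exact S.smul_mem c hs
    | add a b ha hb iha ihb =>
      intro s hs
      have : (⟨a + b, add_mem ha hb⟩ : Algebra.adjoin K {L}) * s = ⟨a, ha⟩ * s + ⟨b, hb⟩ * s :=
        add_mul (⟨a, ha⟩ : Algebra.adjoin K {L}) ⟨b, hb⟩ s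
      rw [this]
      exact S.add_mem (iha s hs) (ihb s hs)
    | mul a b ha hb iha ihb =>
      intro s hs
      have : (⟨a * b, mul_mem ha hb⟩ : Algebra.adjoin K {L}) * s = ⟨a, ha⟩ * (⟨b, hb⟩ * s) :=
        mul_assoc (⟨a, ha⟩ : Algebra.adjoin K {L}) ⟨b, hb⟩ s
      rw [this]
      exact iha _ (ihb s hs)
  let I : Ideal (Algebra.adjoin K {L}) :=
    { carrier := S
      add_mem' := fun ha hb => S.add_mem ha hb
      zero_mem' := S.zero_mem
      smul_mem' := fun r s hs => hrS r s hs }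
  have hSH : S ≤ LinearMap.ker (φ.comp ev) := by
    apply Submodule.span_le.2
    intro a ha
    change φ (ev a) = 0
    by_contra hne
    obtain ⟨c, k, e⟩ := hO _ hne
    apply ha
    refine ⟨c, k, hinj ?_⟩
    rw [e, map_smul, hev, hxp]
  refine core n (R := Algebra.adjoin K {L}) ?_ x ?_ I ?_ ?_ ?_
  · rw [← hfr]; exact E.finrank_eq
  · exact IsUnit.of_mul_eq_one (x ^ N) (by rw [← pow_succ', hxN])
  · intro ht
    have h1 : (1 : Algebra.adjoin K {L}) ∈ I := by rw [ht]; trivial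
    exact hv0 (hSH h1)
  · intro hb
    obtain ⟨a, rfl⟩ := hsurj w
    have ha : a ∈ C := by
      rintro ⟨c, k, e⟩
      apply hw
      exact ⟨c, k, by rw [e, map_smul, hev, hxp]⟩
    have ha' : a ∈ I := Submodule.subset_span ha
    rw [hb] at ha'
    apply ha
    refine ⟨0, 0, ?_⟩
    rw [zero_smul]
    simpa using ha'
  · intro r hr
    by_contra hne
    exact hr (Submodule.subset_span hne)
theorem projMap_injective {K : Type*} [Field K] {n : ℕ} (M : GL (Fin (n + 1)) K) :
    Function.Injective (projMap M) :=
  Projectivization.map_injective _ _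

theorem projMap_pow {K : Type*} [Field K] [Fintype K] {n : ℕ} (M : GL (Fin (n + 1)) K) :
    ∃ N : ℕ, ((projMap M)^[N + 1] = id) := by
  classical
  have : Finite (Projectivization K (Fin (n + 1) → K)) := inferInstance
  have hb : Function.Bijective (projMap M) := Finite.injective_iff_bijective.1 (projMap_injective M)
  let σ := Equiv.ofBijective _ hb
  have h1 : σ ^ (orderOf σ) = 1 := pow_orderOf_eq_one σ
  have h0 : 0 < orderOf σ := orderOf_pos σ
  refine ⟨orderOf σ - 1, ?_⟩
  rw [Nat.sub_add_cancel h0]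
  funext P
  have h2 : (σ ^ orderOf σ) P = P := by rw [h1]; rfl
  rw [← Equiv.Perm.iterate_eq_pow] at h2
  exact h2

theorem toProj_mem {K : Type*} [Field K] {n : ℕ} (x : Fin n → K) :
    toProj x ∈ affineChart K n := by
  obtain ⟨a, ha⟩ := Projectivization.exists_smul_eq_mk_rep K (Fin.snoc x 1 : Fin (n+1) → K) (fun h => by
    have h1 := congrFun h (Fin.last n)
    simp at h1)
  change (toProj x).rep (Fin.last n) ≠ 0
  unfold toProj
  rw [← ha]
  simp [Units.smul_def]

theorem toProj_fromProj {K : Type*} [Field K] {n : ℕ} (P : Projectivization K (Fin (n + 1) → K))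
    (hP : P ∈ affineChart K n) : toProj (fromProj P) = P := by
  have hP' : P.rep (Fin.last n) ≠ 0 := hP
  conv_rhs => rw [← Projectivization.mk_rep P]
  unfold toProj
  rw [Projectivization.mk_eq_mk_iff']
  refine ⟨(P.rep (Fin.last n))⁻¹, ?_⟩
  funext i
  refine Fin.lastCases ?_ (fun i => ?_) i
  · simp [hP']
  · simp [fromProj, div_eq_inv_mul]

theorem toProj_injective {K : Type*} [Field K] {n : ℕ} :
    Function.Injective (toProj : (Fin n → K) → _) := by
  intro x y h
  unfold toProj at h
  rw [Projectivization.mk_eq_mk_iff'] at h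
  obtain ⟨a, ha⟩ := h
  have h1 := congrFun ha (Fin.last n)
  simp at h1
  subst h1
  funext i
  have h2 := congrFun ha (Fin.castSucc i)
  simpa using h2.symm

theorem fracJump_spec {K : Type*} [Field K] [Fintype K] {n : ℕ} (M : GL (Fin (n + 1)) K)
    (x : Fin n → K) : 1 ≤ jumpIndex M x ∧
      toProj (fracJump M x) = (projMap M)^[jumpIndex M x] (toProj x) := by
  obtain ⟨N, hN⟩ := projMap_pow M
  have hne : {k : ℕ | 1 ≤ k ∧ (projMap M)^[k] (toProj x) ∈ affineChart K n}.Nonempty :=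
    ⟨N + 1, by omega, by rw [hN]; exact toProj_mem x⟩
  have := Nat.sInf_mem hne
  exact ⟨this.1, toProj_fromProj _ this.2⟩

theorem iterate_mk {K : Type*} [Field K] {n : ℕ} (M : GL (Fin (n + 1)) K) (k : ℕ)
    (v w : Fin (n + 1) → K) (hv : v ≠ 0) (hw : w ≠ 0) :
    (projMap M)^[k] (Projectivization.mk K v hv) = Projectivization.mk K w hw ↔
      ∃ c : K, w = c • ((Matrix.toLin' (M : Matrix (Fin (n + 1)) (Fin (n + 1)) K)) ^ k) v := by
  induction k generalizing v with
  | zero =>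
    simp only [Function.iterate_zero, id, pow_zero, Module.End.one_apply]
    rw [eq_comm, Projectivization.mk_eq_mk_iff']
    exact exists_congr fun c => eq_comm
  | succ k ih =>
    rw [Function.iterate_succ_apply, pow_succ, Module.End.mul_apply]
    exact ih _ _

/-- Provided we are not in the exceptional cases (`q` prime and `n = 1`) or (`q = 2` and
`n = 2`), an automorphism `Ψ = [M] ∈ PGL_{n+1}(F_q)` acts transitively on `ℙ^n` if and only
if its fractional jump `ψ` acts transitively on `A^n = F_q^n`. -/
theorem statement10 {K : Type*} [Field K] [Fintype K] (n : ℕ) (hn : 0 < n)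
    (M : GL (Fin (n + 1)) K)
    (h1 : ¬(Nat.Prime (Fintype.card K) ∧ n = 1))
    (h2 : ¬(Fintype.card K = 2 ∧ n = 2)) :
    ProjTransitive M ↔ ∀ u v : Fin n → K, ∃ k : ℕ, (fracJump M)^[k] u = v := by
  constructor
  · intro h u v
    obtain ⟨k, hk⟩ := h (toProj u) (toProj v)
    induction k using Nat.strong_induction_on generalizing u with
    | _ k ih =>
      rcases Nat.eq_zero_or_pos k with rfl | hpos
      · exact ⟨0, toProj_injective hk⟩
      · obtain ⟨hJ, hs⟩ := fracJump_spec M u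
        have hle : jumpIndex M u ≤ k := Nat.sInf_le ⟨hpos, by rw [hk]; exact toProj_mem v⟩
        obtain ⟨j, hj⟩ := ih (k - jumpIndex M u) (by omega) (fracJump M u) (by
          rw [hs, ← Function.iterate_add_apply, Nat.sub_add_cancel hle, hk])
        exact ⟨j + 1, by rw [Function.iterate_succ_apply, hj]⟩
  · intro h
    by_contra hnt
    have hU : ∀ u v : Fin n → K, ∃ k : ℕ, (projMap M)^[k] (toProj u) = toProj v := by
      intro u v
      obtain ⟨k, hk⟩ := h u v
      subst hk
      induction k with
      | zero => exact ⟨0, rfl⟩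
      | succ k ih =>
        obtain ⟨j, hj⟩ := ih
        refine ⟨jumpIndex M ((fracJump M)^[k] u) + j, ?_⟩
        rw [Function.iterate_add_apply, hj, Function.iterate_succ_apply', (fracJump_spec M _).2]
    obtain ⟨N, hN⟩ := projMap_pow M
    have hP : ∃ P, ∀ k, (projMap M)^[k] (toProj (0 : Fin n → K)) ≠ P := by
      by_contra hcon
      push Not at hcon
      apply hnt
      intro P Q
      obtain ⟨a, rfl⟩ := hcon P
      obtain ⟨b, rfl⟩ := hcon Q
      refine ⟨N * a + b, ?_⟩
      rw [← Function.iterate_add_apply, show N * a + b + a = b + (N + 1) * a by ring,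
        Function.iterate_add_apply, Function.iterate_mul, hN, Function.iterate_id, id]
    obtain ⟨P, hP⟩ := hP
    set L := Matrix.toLin' (M : Matrix (Fin (n + 1)) (Fin (n + 1)) K) with hL
    obtain ⟨m, hm⟩ : ∃ m, L ^ (m + 1) = 1 := by
      have h0 : 0 < orderOf M := orderOf_pos M
      refine ⟨orderOf M - 1, ?_⟩
      rw [Nat.sub_add_cancel h0, hL, ← Matrix.toLin'_pow, ← Units.val_pow_eq_pow_val, pow_orderOf_eq_one]
      simp; rfl
    let v0 : Fin (n + 1) → K := Fin.snoc (0 : Fin n → K) 1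
    have hv0 : v0 (Fin.last n) = 1 := by simp [v0]
    rcases core_lin n (by simp) L m hm (LinearMap.proj (Fin.last n)) v0
      (by simp [hv0]) (by
        intro v hv
        have hv' : v (Fin.last n) ≠ 0 := hv
        have hvne : v ≠ 0 := by rintro rfl; exact hv' rfl
        obtain ⟨a, ha⟩ := Projectivization.exists_smul_eq_mk_rep K v hvne
        have hmem : Projectivization.mk K v hvne ∈ affineChart K n := by
          change (Projectivization.mk K v hvne).rep (Fin.last n) ≠ 0
          rw [← ha]
          simp [Units.smul_def, hv']
        obtain ⟨k, hk⟩ := hU 0 (fromProj (Projectivization.mk K v hvne))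
        rw [toProj_fromProj _ hmem] at hk
        obtain ⟨c, hc⟩ := (iterate_mk M k _ _ _ _).1 hk
        exact ⟨c, k, hc⟩) P.rep (by
        rintro ⟨c, k, hc⟩
        apply hP k
        rw [← Projectivization.mk_rep P]
        exact (iterate_mk M k _ _ _ _).2 ⟨c, hc⟩) with h | h
    · exact h1 h
    · exact h2 h
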